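/- Let 0 < μ₁ < μ₂. If there exists u ∈ H¹(ℝ) with ‖u‖₂² = μ₁ and F_{6,4}(u) < 0, then there exists v ∈ H¹(ℝ) with ‖v‖₂² = μ₂ and F_{6,4}(v) < 0. In particular, if F_{6,4}(w) ≥ 0 for every w ∈ H¹(ℝ) with ‖w‖₂² = μ₂, then F_{6,4}(w) ≥ 0 for every w ∈ H¹(ℝ) with ‖w‖₂² = μ₁. -/

import Mathlib

open MeasureTheory Real Set

noncomputable section

/-- `u ∈ H¹(ℝ)` with weak derivative `u'`: `u` is continuous, square-integrable,
`u'` is square-integrable, and `u(b) − u(a) = ∫_a^b u'(t) dt` for all `a ≤ b`. -/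
def IsH1 (u u' : ℝ → ℝ) : Prop :=
  Continuous u ∧ Integrable (fun x => (u x) ^ 2) ∧ Integrable (fun x => (u' x) ^ 2) ∧
    ∀ a b : ℝ, a ≤ b → u b - u a = ∫ t in a..b, u' t

/-- The mass `‖u‖₂² = ∫_ℝ u(x)² dx`. -/
def mass (u : ℝ → ℝ) : ℝ := ∫ x, (u x) ^ 2

/-- `D_q(u) = (1/2)∫ u'² − (1/q)|u(0)|^q`. -/
def Dfun (q : ℝ) (u u' : ℝ → ℝ) : ℝ :=
  (1 / 2) * (∫ x, (u' x) ^ 2) - (1 / q) * |u 0| ^ q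

/-- `F_{p,q}(u) = (1/2)∫ u'² − (1/p)∫ |u|^p − (1/q)|u(0)|^q`. -/
def Ffun (p q : ℝ) (u u' : ℝ → ℝ) : ℝ :=
  (1 / 2) * (∫ x, (u' x) ^ 2) - (1 / p) * (∫ x, |u x| ^ p) - (1 / q) * |u 0| ^ q

/-! Replace `u` by `c • u` with `c = √(μ₂ / μ₁) ≥ 1`. The mass and the kinetic term are multiplied
by `c ^ 2`, while the nonlinear terms are multiplied by `c ^ p` and `c ^ q`, which are at least
`c ^ 2` as soon as `p, q ≥ 2`. Hence `F_{p,q}(c • u) ≤ c ^ 2 * F_{p,q}(u)`, and a negative value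
stays negative. -/

section Scaling

variable {u u' : ℝ → ℝ}

theorem IsH1.const_smul (hu : IsH1 u u') (c : ℝ) : IsH1 (c • u) (c • u') := by
  obtain ⟨hcont, hint, hint', hderiv⟩ := hu
  refine ⟨hcont.const_smul c, ?_, ?_, fun a b hab => ?_⟩
  · simpa only [Pi.smul_apply, smul_eq_mul, mul_pow] using hint.const_mul (c ^ 2)
  · simpa only [Pi.smul_apply, smul_eq_mul, mul_pow] using hint'.const_mul (c ^ 2)
  · simp only [Pi.smul_apply, intervalIntegral.integral_smul, ← hderiv a b hab, smul_sub]

theorem mass_const_smul (c : ℝ) (u : ℝ → ℝ) : mass (c • u) = c ^ 2 * mass u := by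
  simp only [mass, Pi.smul_apply, smul_eq_mul, mul_pow, integral_const_mul]

theorem Ffun_const_smul (p q c : ℝ) (u u' : ℝ → ℝ) :
    Ffun p q (c • u) (c • u') =
      1 / 2 * (c ^ 2 * ∫ x, u' x ^ 2) - 1 / p * (|c| ^ p * ∫ x, |u x| ^ p) -
        1 / q * (|c| ^ q * |u 0| ^ q) := by
  simp only [Ffun, Pi.smul_apply, smul_eq_mul, mul_pow, abs_mul,
    mul_rpow (abs_nonneg _) (abs_nonneg _), integral_const_mul]

theorem sq_le_abs_rpow {c r : ℝ} (hc : 1 ≤ |c|) (hr : 2 ≤ r) : c ^ 2 ≤ |c| ^ r :=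
  calc c ^ 2 = |c| ^ (2 : ℝ) := by rw [rpow_two, sq_abs]
    _ ≤ |c| ^ r := rpow_le_rpow_of_exponent_le hc hr

variable {p q : ℝ}

theorem Ffun_const_smul_le {c : ℝ} (hp : 2 ≤ p) (hq : 2 ≤ q) (hc : 1 ≤ |c|) (u u' : ℝ → ℝ) :
    Ffun p q (c • u) (c • u') ≤ c ^ 2 * Ffun p q u u' :=
  calc Ffun p q (c • u) (c • u')
      = 1 / 2 * (c ^ 2 * ∫ x, u' x ^ 2) - 1 / p * (|c| ^ p * ∫ x, |u x| ^ p) -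
          1 / q * (|c| ^ q * |u 0| ^ q) := Ffun_const_smul p q c u u'
    _ ≤ 1 / 2 * (c ^ 2 * ∫ x, u' x ^ 2) - 1 / p * (c ^ 2 * ∫ x, |u x| ^ p) -
          1 / q * (c ^ 2 * |u 0| ^ q) := by
      gcongr
      · exact sq_le_abs_rpow hc hp
      · exact sq_le_abs_rpow hc hq
    _ = c ^ 2 * Ffun p q u u' := by rw [Ffun]; ring

theorem exists_mass_eq_and_Ffun_neg (hp : 2 ≤ p) (hq : 2 ≤ q) {μ : ℝ} (hu : IsH1 u u')
    (hmass : 0 < mass u) (hμ : mass u ≤ μ) (hneg : Ffun p q u u' < 0) :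
    ∃ v v' : ℝ → ℝ, IsH1 v v' ∧ mass v = μ ∧ Ffun p q v v' < 0 := by
  have one_le_ratio : 1 ≤ μ / mass u := (one_le_div hmass).2 hμ
  set c := √(μ / mass u)
  have c_sq : c ^ 2 = μ / mass u := sq_sqrt (zero_le_one.trans one_le_ratio)
  have one_le_c : 1 ≤ |c| := (one_le_sqrt.2 one_le_ratio).trans (le_abs_self c)
  refine ⟨c • u, c • u', hu.const_smul c, ?_, ?_⟩
  · rw [mass_const_smul, c_sq, div_mul_cancel₀ _ hmass.ne']
  · calc Ffun p q (c • u) (c • u') ≤ c ^ 2 * Ffun p q u u' := Ffun_const_smul_le hp hq one_le_c u u'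
      _ < 0 := mul_neg_of_pos_of_neg (by positivity) hneg

end Scaling

theorem stmt19_general {p q : ℝ} (hp : 2 ≤ p) (hq : 2 ≤ q) {μ₁ μ₂ : ℝ} (h1 : 0 < μ₁)
    (h12 : μ₁ ≤ μ₂) :
    ((∃ u u' : ℝ → ℝ, IsH1 u u' ∧ mass u = μ₁ ∧ Ffun p q u u' < 0) →
      ∃ v v' : ℝ → ℝ, IsH1 v v' ∧ mass v = μ₂ ∧ Ffun p q v v' < 0) ∧
    ((∀ w w' : ℝ → ℝ, IsH1 w w' → mass w = μ₂ → 0 ≤ Ffun p q w w') →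
      ∀ w w' : ℝ → ℝ, IsH1 w w' → mass w = μ₁ → 0 ≤ Ffun p q w w') := by
  refine ⟨?_, fun hnonneg w w' hw hmass => ?_⟩
  · rintro ⟨u, u', hu, rfl, hneg⟩
    exact exists_mass_eq_and_Ffun_neg hp hq hu h1 h12 hneg
  · subst hmass
    by_contra! hneg
    obtain ⟨v, v', hv, hv_mass, hv_neg⟩ := exists_mass_eq_and_Ffun_neg hp hq hw h1 h12 hneg
    exact hv_neg.not_ge (hnonneg v v' hv hv_mass)

theorem stmt19 (μ₁ μ₂ : ℝ) (h1 : 0 < μ₁) (h12 : μ₁ < μ₂) :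
    ((∃ u u' : ℝ → ℝ, IsH1 u u' ∧ mass u = μ₁ ∧ Ffun 6 4 u u' < 0) →
      ∃ v v' : ℝ → ℝ, IsH1 v v' ∧ mass v = μ₂ ∧ Ffun 6 4 v v' < 0) ∧
    ((∀ w w' : ℝ → ℝ, IsH1 w w' → mass w = μ₂ → 0 ≤ Ffun 6 4 w w') →
      ∀ w w' : ℝ → ℝ, IsH1 w w' → mass w = μ₁ → 0 ≤ Ffun 6 4 w w') :=
  stmt19_general (by norm_num) (by norm_num) h1 h12.le
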